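/- For every odd natural number n with n ≥ 3 and every z ∈ ℂ, Ĥ_n(z) = M₁(n)·ν_n(z), where M₁(n) = (−1)^{(n+1)/2}·n!·2^{(n+1)/2} / ((n−1)(n−2)·∏_{j=1}^{(n−3)/2}(n − 2(1+j) + 1)). -/

import Mathlib

/-- Physicists' Hermite polynomials via the Rodrigues formula (complex version). -/
noncomputable def Hc (n : ℕ) (z : ℂ) : ℂ :=
  (-1) ^ n * Complex.exp (z ^ 2) * iteratedDeriv n (fun t => Complex.exp (-t ^ 2)) z

/-- The function Ĥₙ. -/
noncomputable def Hhatc (n : ℕ) (z : ℂ) : ℂ :=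
  Hc n z + 4 * (n : ℂ) * Hc (n - 2) z + 4 * (n : ℂ) * ((n : ℂ) - 3) * Hc (n - 4) z

/-- Even coefficients c_{2k}(n) of the generalized power series. -/
noncomputable def ceven (n k : ℕ) : ℂ :=
  if k = 0 then 1
  else if k = 1 then -(n : ℂ)
  else (-1) ^ k * 2 ^ k * (n : ℂ) * ((n : ℂ) - ((2 * (k : ℂ) - 1) ^ 2 + 1)) *
    (∏ j ∈ Finset.Icc 1 (k - 2), ((n : ℂ) - 2 * (1 + (j : ℂ)))) /
      (Nat.factorial (2 * k) : ℂ)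

/-- Odd coefficients: `codd n k` is c_{2k-1}(n), for k ≥ 1. -/
noncomputable def codd (n k : ℕ) : ℂ :=
  if k ≤ 1 then 1
  else (-1) ^ (k + 1) * 2 ^ (k - 1) * ((n : ℂ) - ((2 * ((k : ℂ) - 1)) ^ 2 + 1)) *
    (∏ j ∈ Finset.Icc 1 (k - 2), ((n : ℂ) - (2 * (1 + (j : ℂ)) - 1))) /
      (Nat.factorial (2 * k - 1) : ℂ)

/-- μₙ(z) = Σ_{k≥0} c_{2k}(n)·z^{2k}. -/
noncomputable def muF (n : ℕ) (z : ℂ) : ℂ := ∑' k : ℕ, ceven n k * z ^ (2 * k)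

/-- νₙ(z) = Σ_{k≥1} c_{2k-1}(n)·z^{2k-1}. -/
noncomputable def nuF (n : ℕ) (z : ℂ) : ℂ := ∑' k : ℕ, codd n (k + 1) * z ^ (2 * k + 1)

/-- βₙ = μₙ + νₙ. -/
noncomputable def betaF (n : ℕ) (z : ℂ) : ℂ := muF n z + nuF n z

/-- The proportionality constant M₁(n). -/
noncomputable def M1 (n : ℕ) : ℂ :=
  (-1) ^ ((n + 1) / 2) * (Nat.factorial n : ℂ) * 2 ^ ((n + 1) / 2) /
    (((n : ℂ) - 1) * ((n : ℂ) - 2) *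
      ∏ j ∈ Finset.Icc 1 ((n - 3) / 2), ((n : ℂ) - 2 * (1 + (j : ℂ)) + 1))

open Polynomial in
/-- Hermite polynomials by recursion. -/
noncomputable def HP : ℕ → Polynomial ℂ
  | 0 => 1
  | n + 1 => 2 * X * HP n - derivative (HP n)

lemma HP_iter (n : ℕ) : iteratedDeriv n (fun t : ℂ => Complex.exp (-t ^ 2)) =
    fun z => (-1) ^ n * (HP n).eval z * Complex.exp (-z ^ 2) := by
  induction n with
  | zero => funext z; simp [HP]
  | succ n ih =>
    rw [iteratedDeriv_succ, ih]
    funext z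
    have h1 : HasDerivAt (fun z : ℂ => Complex.exp (-z ^ 2))
        (Complex.exp (-z ^ 2) * (-(2 * z))) z := by
      have := ((hasDerivAt_pow 2 z).neg).cexp
      simpa using this
    have h2 := (((HP n).hasDerivAt z).const_mul ((-1 : ℂ) ^ n)).mul h1
    have h3 := h2.deriv
    refine Eq.trans ?_ (h3.trans ?_)
    · rfl
    · simp only [HP, Polynomial.eval_sub, Polynomial.eval_mul, Polynomial.eval_X,
        Polynomial.eval_ofNat]
      ring

lemma Hc_eq (n : ℕ) (z : ℂ) : Hc n z = (HP n).eval z := by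
  have h : Complex.exp (z ^ 2) * Complex.exp (-z ^ 2) = 1 := by
    rw [← Complex.exp_add]; simp
  have h' : ((-1 : ℂ) ^ n) * (-1) ^ n = 1 := by
    rw [← mul_pow]; simp
  rw [Hc, HP_iter]
  linear_combination (HP n).eval z * h + (HP n).eval z * (Complex.exp (z ^ 2) * Complex.exp (-z ^ 2)) * h'

lemma HP_coeff_zero (n : ℕ) : (HP (n + 1)).coeff 0 = - (HP n).coeff 1 := by
  rw [HP, Polynomial.coeff_sub, mul_assoc, Polynomial.coeff_ofNat_mul, Polynomial.coeff_X_mul_zero,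
    Polynomial.coeff_derivative]
  simp

lemma HP_coeff_succ (n j : ℕ) :
    (HP (n + 1)).coeff (j + 1) = 2 * (HP n).coeff j - (j + 2) * (HP n).coeff (j + 2) := by
  rw [HP, Polynomial.coeff_sub, mul_assoc, Polynomial.coeff_ofNat_mul, Polynomial.coeff_X_mul,
    Polynomial.coeff_derivative]
  push_cast; ring

lemma HP_coeff_gt (n j : ℕ) (h : n < j) : (HP n).coeff j = 0 := by
  induction n generalizing j with
  | zero =>
    rw [HP, Polynomial.coeff_one, if_neg (by omega)]
  | succ n ih =>
    obtain ⟨j, rfl⟩ : ∃ i, j = i + 1 := ⟨j - 1, by omega⟩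
    rw [HP_coeff_succ, ih j (by omega), ih (j + 2) (by omega)]; simp

lemma HP_coeff_odd (n j : ℕ) (h : (n + j) % 2 = 1) : (HP n).coeff j = 0 := by
  induction n generalizing j with
  | zero =>
    rw [HP, Polynomial.coeff_one, if_neg (by omega)]
  | succ n ih =>
    rcases j with _ | j
    · rw [HP_coeff_zero, ih 1 (by omega)]; simp
    · rw [HP_coeff_succ, ih j (by omega), ih (j + 2) (by omega)]; simp

lemma HP_coeff (n : ℕ) : ∀ q j : ℕ, n = 2 * q + j →
    (HP n).coeff j = (-1) ^ q * (n.factorial : ℂ) * 2 ^ j / ((q.factorial : ℂ) * j.factorial) := by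
  have hf : ∀ i : ℕ, (i.factorial : ℂ) ≠ 0 := fun i => by exact_mod_cast i.factorial_ne_zero
  induction n with
  | zero =>
    intro q j h
    obtain rfl : q = 0 := by omega
    obtain rfl : j = 0 := by omega
    simp [HP]
  | succ n ih =>
    intro q j h
    rcases j with _ | j
    · obtain ⟨q, rfl⟩ : ∃ i, q = i + 1 := ⟨q - 1, by omega⟩
      have hn : n = 2 * q + 1 := by omega
      rw [HP_coeff_zero, ih q 1 hn]
      have hc : (n : ℂ) = 2 * q + 1 := by rw [hn]; push_cast; ring
      have := hf q
      have hq : (q : ℂ) + 1 ≠ 0 := by exact_mod_cast q.succ_ne_zero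
      rw [Nat.factorial_succ n, Nat.factorial_succ q]
      push_cast
      rw [hc]
      simp only [Nat.factorial_one, Nat.factorial_zero, Nat.cast_one]
      field_simp
      ring
    · have hj := hf j
      have hj1 : (j : ℂ) + 1 ≠ 0 := by exact_mod_cast j.succ_ne_zero
      have hj2 : (j : ℂ) + 1 + 1 ≠ 0 := by exact_mod_cast (j+1).succ_ne_zero
      rw [HP_coeff_succ, ih q j (by omega)]
      rcases q with _ | q
      · have hn : n = j := by omega
        rw [HP_coeff_gt n (j + 2) (by omega), hn, Nat.factorial_succ j]
        push_cast
        simp only [Nat.factorial_zero, Nat.cast_one]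
        field_simp
        ring
      · have hn : n = 2 * q + (j + 2) := by omega
        have hc : (n : ℂ) = 2 * q + j + 2 := by rw [hn]; push_cast; ring
        have := hf q
        have hq : (q : ℂ) + 1 ≠ 0 := by exact_mod_cast q.succ_ne_zero
        rw [ih q (j + 2) hn, Nat.factorial_succ n, Nat.factorial_succ q, Nat.factorial_succ (j + 1),
          Nat.factorial_succ j]
        push_cast
        rw [hc]
        field_simp
        ring

lemma sum_two (f : ℕ → ℂ) (N : ℕ) (hf : ∀ k, f (2 * k) = 0) :
    ∑ i ∈ Finset.range (2 * N), f i = ∑ k ∈ Finset.range N, f (2 * k + 1) := by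
  induction N with
  | zero => simp
  | succ N ih =>
    rw [show 2 * (N + 1) = 2 * N + 1 + 1 by ring, Finset.sum_range_succ, Finset.sum_range_succ, ih,
      Finset.sum_range_succ, hf]
    simp

lemma HP_eval (p N : ℕ) (h : p < N) (z : ℂ) : (HP (2 * p + 1)).eval z =
    ∑ k ∈ Finset.range N, (HP (2 * p + 1)).coeff (2 * k + 1) * z ^ (2 * k + 1) := by
  have hd : (HP (2 * p + 1)).natDegree < 2 * N := by
    refine lt_of_le_of_lt (Polynomial.natDegree_le_iff_coeff_eq_zero.2
      (fun j hj => HP_coeff_gt _ _ hj)) (by omega : 2 * p + 1 < 2 * N)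
  rw [Polynomial.eval_eq_sum_range' hd,
    sum_two (fun i => (HP (2 * p + 1)).coeff i * z ^ i)]
  intro k
  rw [HP_coeff_odd _ _ (by omega)]; simp

lemma prod_aux (m : ℕ) : ∀ t r : ℕ, m = r + t →
    (∏ j ∈ Finset.Icc 1 t, (2 * (m : ℂ) + 3 - (2 * (1 + (j : ℂ)) - 1))) * (r.factorial : ℂ)
      = 2 ^ t * (m.factorial : ℂ) := by
  intro t
  induction t with
  | zero => intro r h; simp [h]
  | succ t ih =>
    intro r h
    have := ih (r + 1) (by omega)
    rw [Finset.prod_Icc_succ_top (by omega), pow_succ]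
    rw [Nat.factorial_succ] at this
    have hc : (m : ℂ) = r + t + 1 := by rw [h]; push_cast; ring
    push_cast at this ⊢
    generalize (∏ j ∈ Finset.Icc 1 t, (2 * (m : ℂ) + 3 - (2 * (1 + (j : ℂ)) - 1))) = P at *
    rw [hc]
    linear_combination 2 * this

lemma M1_eq (m : ℕ) : M1 (2 * m + 3) =
    2 * (-1) ^ m * ((2 * m + 3).factorial : ℂ) / (((m + 1).factorial : ℂ) * (2 * m + 1)) := by
  have h := prod_aux m m 0 (by omega)
  have hm : (m.factorial : ℂ) ≠ 0 := by exact_mod_cast m.factorial_ne_zero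
  have h1 : (m : ℂ) + 1 ≠ 0 := by exact_mod_cast m.succ_ne_zero
  have h2 : 2 * (m : ℂ) + 1 ≠ 0 := by exact_mod_cast (2 * m).succ_ne_zero
  rw [M1, show (2 * m + 3 + 1) / 2 = m + 2 by omega, show (2 * m + 3 - 3) / 2 = m by omega]
  have e : (∏ j ∈ Finset.Icc 1 m, (((2 * m + 3 : ℕ) : ℂ) - 2 * (1 + (j : ℂ)) + 1)) =
      2 ^ m * (m.factorial : ℂ) := by
    rw [← h]
    simp only [Nat.factorial_zero, Nat.cast_one, mul_one]
    refine Finset.prod_congr rfl fun j _ => ?_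
    push_cast; ring
  rw [e, show ((2 * m + 3 : ℕ) : ℂ) - 1 = 2 * (m + 1) by push_cast; ring,
    show ((2 * m + 3 : ℕ) : ℂ) - 2 = 2 * m + 1 by push_cast; ring, Nat.factorial_succ m]
  push_cast
  field_simp
  ring

lemma codd_zero (m k : ℕ) (h : m + 1 < k) : codd (2 * m + 3) (k + 1) = 0 := by
  rw [codd, if_neg (by omega)]
  have : (∏ j ∈ Finset.Icc 1 (k + 1 - 2),
      (((2 * m + 3 : ℕ) : ℂ) - (2 * (1 + (j : ℂ)) - 1))) = 0 := by
    refine Finset.prod_eq_zero (i := m + 1) (Finset.mem_Icc.2 ⟨by omega, by omega⟩) ?_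
    push_cast; ring
  rw [this]; simp

lemma codd_eq (m k r : ℕ) (h : m + 1 = k + r) : codd (2 * m + 3) (k + 1) =
    (-1) ^ k * 4 ^ k * ((m : ℂ) + 1 - 2 * k ^ 2) * (m.factorial : ℂ) /
      ((r.factorial : ℂ) * ((2 * k + 1).factorial : ℂ)) := by
  have hm : (m.factorial : ℂ) ≠ 0 := by exact_mod_cast m.factorial_ne_zero
  have h1 : (m : ℂ) + 1 ≠ 0 := by exact_mod_cast m.succ_ne_zero
  have hr : (r.factorial : ℂ) ≠ 0 := by exact_mod_cast r.factorial_ne_zero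
  rcases k with _ | k
  · obtain rfl : r = m + 1 := by omega
    rw [Nat.factorial_succ m]
    simp [codd]
    field_simp
  · have hp := prod_aux m k r (by omega)
    rw [codd, if_neg (by omega), show k + 1 + 1 - 2 = k by omega,
      show k + 1 + 1 - 1 = k + 1 by omega, show 2 * (k + 1 + 1) - 1 = 2 * (k + 1) + 1 by omega]
    have hk : ((2 * (k + 1) + 1).factorial : ℂ) ≠ 0 := by
      exact_mod_cast Nat.factorial_ne_zero _
    rw [div_eq_div_iff hk (mul_ne_zero hr hk)]
    have e4 : (4 : ℂ) ^ (k + 1) = 2 ^ (k + 1) * 2 ^ (k + 1) := by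
      rw [← mul_pow]; norm_num
    rw [e4]
    push_cast
    generalize (∏ j ∈ Finset.Icc 1 k, (2 * (m : ℂ) + 3 - (2 * (1 + (j : ℂ)) - 1))) = P at *
    linear_combination ((-1) ^ (k + 1 + 1 + 1) * 2 ^ (k + 1) *
      (2 * (m : ℂ) + 3 - ((2 * ((k : ℂ) + 1 + 1 - 1)) ^ 2 + 1)) *
      ((2 * (k + 1) + 1).factorial : ℂ)) * hp

lemma nuF_eq (m : ℕ) (z : ℂ) : nuF (2 * m + 3) z =
    ∑ k ∈ Finset.range (m + 2), codd (2 * m + 3) (k + 1) * z ^ (2 * k + 1) := by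
  rw [nuF]
  refine tsum_eq_sum fun k hk => ?_
  rw [codd_zero m k (by have := Finset.mem_range.not.1 hk; omega)]; simp

theorem stmt12 (n : ℕ) (hodd : Odd n) (hn : 3 ≤ n) (z : ℂ) :
    Hhatc n z = M1 n * nuF n z := by
  have hf : ∀ i : ℕ, (i.factorial : ℂ) ≠ 0 := fun i => by exact_mod_cast i.factorial_ne_zero
  obtain ⟨m, rfl⟩ : ∃ m, n = 2 * m + 3 := by
    obtain ⟨a, rfl⟩ := hodd
    exact ⟨a - 1, by omega⟩
  rw [nuF_eq, M1_eq, Hhatc, Hc_eq, Hc_eq, Hc_eq]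
  rcases m with _ | m
  · have e3 := HP_eval 1 2 (by omega) z
    have e1 := HP_eval 0 2 (by omega) z
    simp only [Finset.sum_range_succ, Finset.sum_range_zero] at e3 e1 ⊢
    norm_num at e3 e1 ⊢
    rw [HP_coeff 3 1 1 (by omega), HP_coeff 3 0 3 (by omega)] at e3
    rw [HP_coeff 1 0 1 (by omega), HP_coeff_gt 1 3 (by omega)] at e1
    rw [e3, e1]
    norm_num [codd, Nat.factorial]
    ring
  · rw [show 2 * (m + 1) + 3 - 2 = 2 * (m + 1) + 1 by omega,
      show 2 * (m + 1) + 3 - 4 = 2 * m + 1 by omega]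
    have e5 := HP_eval (m + 2) (m + 3) (by omega) z
    rw [show 2 * (m + 2) + 1 = 2 * (m + 1) + 3 by ring] at e5
    rw [e5, HP_eval (m + 1) (m + 3) (by omega) z, HP_eval m (m + 3) (by omega) z,
      Finset.mul_sum, Finset.mul_sum, Finset.mul_sum, ← Finset.sum_add_distrib,
      ← Finset.sum_add_distrib]
    refine Finset.sum_congr rfl fun k hk => ?_
    have hk' : k < m + 3 := by simpa using hk
    have hm3 : 2 * ((m : ℂ) + 1) + 1 ≠ 0 := by exact_mod_cast (2 * (m + 1)).succ_ne_zero
    have hm1 : (m : ℂ) + 1 ≠ 0 := by exact_mod_cast m.succ_ne_zero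
    have hm2 : (m : ℂ) + 1 + 1 ≠ 0 := by exact_mod_cast (m + 1).succ_ne_zero
    have hkf := hf (2 * k + 1)
    have hmf := hf m
    have e4 : (2 : ℂ) ^ (2 * k + 1) = 2 * 4 ^ k := by
      rw [pow_succ, pow_mul]; norm_num; ring
    have F3 : ((2 * (m + 1) + 3).factorial : ℂ) = (2 * m + 5) * (2 * m + 4) * (2 * m + 3) *
        (2 * m + 2) * ((2 * m + 1).factorial : ℂ) := by
      rw [show 2 * (m + 1) + 3 = 2 * m + 1 + 1 + 1 + 1 + 1 by ring]
      simp only [Nat.factorial_succ (2 * m + 1 + 1 + 1 + 1), Nat.factorial_succ (2 * m + 1 + 1 + 1),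
        Nat.factorial_succ (2 * m + 1 + 1), Nat.factorial_succ (2 * m + 1)]
      push_cast; ring
    have F2 : ((2 * (m + 1) + 1).factorial : ℂ) = (2 * m + 3) *
        (2 * m + 2) * ((2 * m + 1).factorial : ℂ) := by
      rw [show 2 * (m + 1) + 1 = 2 * m + 1 + 1 + 1 by ring]
      simp only [Nat.factorial_succ (2 * m + 1 + 1), Nat.factorial_succ (2 * m + 1)]
      push_cast; ring
    obtain ⟨q, hq⟩ : ∃ q, m + 2 = k + q := ⟨m + 2 - k, by omega⟩
    rw [codd_eq (m + 1) k q (by omega), HP_coeff (2 * (m + 1) + 3) q (2 * k + 1) (by omega), F3, e4,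
      Nat.factorial_succ (m + 1), Nat.factorial_succ m]
    have hsg : (-1 : ℂ) ^ (m + 1) = -((-1) ^ k * (-1) ^ q) := by
      rw [← pow_add, ← hq]; ring
    have hF := hf (2 * m + 1)
    have hqc : (k : ℂ) = m + 2 - q := by
      have : ((m + 2 : ℕ) : ℂ) = ((k + q : ℕ) : ℂ) := by rw [hq]
      push_cast at this
      linear_combination -this
    rw [hsg]
    rcases q with _ | _ | q
    · rw [HP_coeff_gt (2 * (m + 1) + 1) _ (by omega), HP_coeff_gt (2 * m + 1) _ (by omega)]
      simp only [Nat.factorial_zero]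
      push_cast at hqc ⊢
      rw [hqc]
      generalize ((2 * k + 1).factorial : ℂ) = A at *
      generalize ((2 * m + 1).factorial : ℂ) = B at *
      generalize z ^ (2 * k + 1) = Z at *
      generalize (4 : ℂ) ^ k = W at *
      rcases neg_one_pow_eq_or ℂ k with hs | hs <;> rw [hs] <;> field_simp <;> ring
    · rw [HP_coeff_gt (2 * m + 1) _ (by omega),
        HP_coeff (2 * (m + 1) + 1) 0 (2 * k + 1) (by omega), e4, F2]
      simp only [Nat.factorial_zero, zero_add, Nat.factorial_one]
      push_cast at hqc ⊢
      rw [hqc]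
      generalize ((2 * k + 1).factorial : ℂ) = A at *
      generalize ((2 * m + 1).factorial : ℂ) = B at *
      generalize z ^ (2 * k + 1) = Z at *
      generalize (4 : ℂ) ^ k = W at *
      rcases neg_one_pow_eq_or ℂ k with hs | hs <;> rw [hs] <;> field_simp <;> ring
    · rw [HP_coeff (2 * m + 1) q (2 * k + 1) (by omega),
        HP_coeff (2 * (m + 1) + 1) (q + 1) (2 * k + 1) (by omega), e4, F2,
        Nat.factorial_succ (q + 1), Nat.factorial_succ q]
      have hq0 := hf q
      have hq1 : (q : ℂ) + 1 ≠ 0 := by exact_mod_cast q.succ_ne_zero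
      have hq2 : (q : ℂ) + 1 + 1 ≠ 0 := by exact_mod_cast (q + 1).succ_ne_zero
      push_cast at hqc ⊢
      rw [hqc, pow_succ (-1 : ℂ) (q + 1), pow_succ (-1 : ℂ) q]
      generalize ((2 * k + 1).factorial : ℂ) = A at *
      generalize ((2 * m + 1).factorial : ℂ) = B at *
      generalize z ^ (2 * k + 1) = Z at *
      generalize (4 : ℂ) ^ k = W at *
      generalize (-1 : ℂ) ^ q = T at *
      rcases neg_one_pow_eq_or ℂ k with hs | hs <;> rw [hs] <;> field_simp <;> ring
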